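/- Let C be an abelian category and X an object of its bounded derived category D^b(C) such that Ext^k(H^i(X), H^j(X)) = 0 for all i, j ∈ ℤ and all k ≥ 2. Then X is split: there is an isomorphism X ≅ ⊕_{i∈ℤ} H^i(X)[−i] in D^b(C). (Lemma 3.1.) -/

import Mathlib

open CategoryTheory Limits

/-!
Let `τ_{<i} X → τ_{≤i} X → H^i(X)[-i] → (τ_{<i} X)[1]` be the truncation triangle in degree `i`.
By dévissage, `τ_{<i} X` is an iterated extension of the objects `H^j(X)[-j]` for `j < i`, and
`Hom(H^i(X)[-i], H^j(X)[-j][1]) = Ext^{i-j+1}(H^i(X), H^j(X))` vanishes since `i - j + 1 ≥ 2`.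
Hence the connecting morphism is zero, and lifting the identity of `H^i(X)[-i]` gives a morphism
`H^i(X)[-i] → τ_{≤i} X → X` inducing an isomorphism in degree `i`.  The sum of these morphisms over
all `i` is an isomorphism in every degree.
-/

section Biproducts

variable {D E : Type*} [Category D] [Category E] [Preadditive D] [Preadditive E]
  {J : Type} (F : D ⥤ E) [F.Additive] (A : J → D) [HasBiproduct A]

lemma sum_map_biproduct_π_comp_map_biproduct_ι [Fintype J] :
    ∑ j, F.map (biproduct.π A j) ≫ F.map (biproduct.ι A j) = 𝟙 (F.obj (⨁ A)) := by
  simp only [← F.map_comp]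
  rw [← F.map_sum, biproduct.total, F.map_id]

lemma isZero_map_biproduct [Finite J] (h : ∀ j, IsZero (F.obj (A j))) :
    IsZero (F.obj (⨁ A)) := by
  have := Fintype.ofFinite J
  rw [IsZero.iff_id_eq_zero, ← sum_map_biproduct_π_comp_map_biproduct_ι]
  exact Finset.sum_eq_zero fun j _ ↦ by rw [(h j).eq_of_tgt (F.map (biproduct.π A j)) 0, zero_comp]

lemma isIso_map_biproduct_ι [Finite J] (j : J) (h : ∀ i ≠ j, IsZero (F.obj (A i))) :
    IsIso (F.map (biproduct.ι A j)) := by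
  have := Fintype.ofFinite J
  refine ⟨F.map (biproduct.π A j), ?_, ?_⟩
  · rw [← F.map_comp, biproduct.ι_π_self, F.map_id]
  · rw [← sum_map_biproduct_π_comp_map_biproduct_ι, Fintype.sum_eq_single j]
    intro i hi
    rw [(h i hi).eq_of_tgt (F.map (biproduct.π A i)) 0, zero_comp]

end Biproducts

lemma hom_shift_eq_zero {D : Type*} [Category D] [HasZeroMorphisms D] [HasShift D ℤ]
    [∀ n : ℤ, (shiftFunctor D n).PreservesZeroMorphisms] {A B : D} {n : ℤ}
    (h : ∀ g : A⟦-n⟧ ⟶ B, g = 0) (f : A ⟶ B⟦n⟧) : f = 0 := by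
  apply (shiftFunctor D (-n)).map_injective
  rw [Functor.map_zero, ← cancel_mono (shiftShiftNeg B n).hom, zero_comp]
  exact h _

section

open DerivedCategory DerivedCategory.TStructure Pretriangulated

variable {C : Type*} [Category C] [Abelian C] [HasDerivedCategory C]

lemma isIso_homologyFunctor_map_mor₁ {T : Triangle (DerivedCategory C)} (hT : T ∈ distTriang _)
    (n : ℤ) (h₀ : IsZero ((homologyFunctor C (n - 1)).obj T.obj₃))
    (h₁ : IsZero ((homologyFunctor C n).obj T.obj₃)) :
    IsIso ((homologyFunctor C n).map T.mor₁) := by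
  have : Mono ((homologyFunctor C n).map T.mor₁) :=
    (HomologySequence.mono_homologyMap_mor₁_iff T hT (n - 1) n).2 (h₀.eq_of_src _ _)
  have : Epi ((homologyFunctor C n).map T.mor₁) :=
    (HomologySequence.epi_homologyMap_mor₁_iff T hT n).2 (h₁.eq_of_tgt _ _)
  exact isIso_of_mono_of_epi _

lemma isIso_homologyFunctor_map_mor₂ {T : Triangle (DerivedCategory C)} (hT : T ∈ distTriang _)
    (n : ℤ) (h₀ : IsZero ((homologyFunctor C n).obj T.obj₁))
    (h₁ : IsZero ((homologyFunctor C (n + 1)).obj T.obj₁)) :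
    IsIso ((homologyFunctor C n).map T.mor₂) := by
  have : Mono ((homologyFunctor C n).map T.mor₂) :=
    (HomologySequence.mono_homologyMap_mor₂_iff T hT n).2 (h₀.eq_of_src _ _)
  have : Epi ((homologyFunctor C n).map T.mor₂) :=
    (HomologySequence.epi_homologyMap_mor₂_iff T hT n (n + 1)).2 (h₁.eq_of_tgt _ _)
  exact isIso_of_mono_of_epi _

lemma isIso_homologyFunctor_map_truncLTι_app (X : DerivedCategory C) {i n : ℤ} (h : i < n) :
    IsIso ((homologyFunctor C i).map ((t.truncLTι n).app X)) :=
  isIso_homologyFunctor_map_mor₁ (t.triangleLTGE_distinguished n X) i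
    (isZero_of_isGE ((t.truncGE n).obj X) n _ (by lia))
    (isZero_of_isGE ((t.truncGE n).obj X) n _ h)

lemma isIso_homologyFunctor_map_truncGEπ_app (X : DerivedCategory C) {i n : ℤ} (h : n ≤ i) :
    IsIso ((homologyFunctor C i).map ((t.truncGEπ n).app X)) :=
  have := t.isLE_truncLT_obj X n (n - 1)
  isIso_homologyFunctor_map_mor₂ (t.triangleLTGE_distinguished n X) i
    (isZero_of_isLE ((t.truncLT n).obj X) (n - 1) _ (by lia))
    (isZero_of_isLE ((t.truncLT n).obj X) (n - 1) _ (by lia))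

lemma nonempty_iso_singleFunctor_obj_homology (X : DerivedCategory C) (n : ℤ)
    [X.IsGE n] [X.IsLE n] :
    Nonempty (X ≅ (singleFunctor C n).obj ((homologyFunctor C n).obj X)) := by
  obtain ⟨Y, ⟨e⟩⟩ := exists_iso_singleFunctor_obj_of_isGE_of_isLE X n
  let e' : Y ≅ (homologyFunctor C n).obj X :=
    ((singleFunctorCompHomologyFunctorIso C n).app Y).symm ≪≫ (homologyFunctor C n).mapIso e.symm
  exact ⟨e ≪≫ (singleFunctor C n).mapIso e'⟩

lemma nonempty_truncGELT_obj_iso_singleFunctor_obj_homology (X : DerivedCategory C) (n : ℤ) :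
    Nonempty ((t.truncGELT n (n + 1)).obj X ≅
      (singleFunctor C n).obj ((homologyFunctor C n).obj X)) := by
  have : ((t.truncGELT n (n + 1)).obj X).IsLE n :=
    inferInstanceAs (t.IsLE ((t.truncGE n).obj ((t.truncLT (n + 1)).obj X)) n)
  have := isIso_homologyFunctor_map_truncLTι_app X (lt_add_one n)
  have := isIso_homologyFunctor_map_truncGEπ_app ((t.truncLT (n + 1)).obj X) (le_refl n)
  obtain ⟨e⟩ := nonempty_iso_singleFunctor_obj_homology ((t.truncGELT n (n + 1)).obj X) n
  let e' : (homologyFunctor C n).obj ((t.truncGELT n (n + 1)).obj X) ≅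
      (homologyFunctor C n).obj X :=
    (asIso ((homologyFunctor C n).map ((t.truncGEπ n).app ((t.truncLT (n + 1)).obj X)))).symm ≪≫
      asIso ((homologyFunctor C n).map ((t.truncLTι (n + 1)).app X))
  exact ⟨e ≪≫ (singleFunctor C n).mapIso e'⟩

lemma prop_truncLT_obj_of_prop_singleFunctor_obj_homology (P : ObjectProperty (DerivedCategory C))
    [P.ContainsZero] [P.IsClosedUnderIsomorphisms] [P.IsTriangulatedClosed₂]
    (X : DerivedCategory C) (a n : ℤ) [X.IsGE a]
    (h : ∀ i < n, P ((singleFunctor C i).obj ((homologyFunctor C i).obj X))) :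
    P ((t.truncLT n).obj X) := by
  have prop_of_le {m : ℤ} (hm : m ≤ a) : P ((t.truncLT m).obj X) :=
    have := t.isGE_of_ge X m a
    P.prop_of_isZero (t.isZero_truncLT_obj_of_isGE m X)
  obtain hn | hn := le_total n a
  · exact prop_of_le hn
  induction n, hn using Int.leInduction with
  | base => exact prop_of_le le_rfl
  | succ n _ ih =>
    obtain ⟨e⟩ := nonempty_truncGELT_obj_iso_singleFunctor_obj_homology X n
    exact P.ext_of_isTriangulatedClosed₂ _
      (t.triangleLTLTGELT_distinguished n (n + 1) (by lia) X)
      (ih fun i hi ↦ h i (by lia)) (P.prop_of_iso e.symm (h n (lt_add_one n)))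

lemma singleFunctor_hom_eq_zero {M N : C} {i j k : ℤ} (hk : j + k = i)
    (h : ∀ φ : (singleFunctor C 0).obj M ⟶ ((singleFunctor C 0).obj N)⟦k⟧, φ = 0)
    (f : (singleFunctor C i).obj M ⟶ (singleFunctor C j).obj N) : f = 0 := by
  let eM : ((singleFunctor C i).obj M)⟦i⟧ ≅ (singleFunctor C 0).obj M :=
    ((singleFunctors C).shiftIso i 0 i (by lia)).app M
  let eN : ((singleFunctor C j).obj N)⟦i⟧ ≅ ((singleFunctor C 0).obj N)⟦k⟧ :=
    ((singleFunctors C).shiftIso i (-k) j (by lia)).app N ≪≫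
      (((singleFunctors C).shiftIso k (-k) 0 (by lia)).app N).symm
  apply (shiftFunctor _ i).map_injective
  rw [Functor.map_zero, ← cancel_epi eM.inv, ← cancel_mono eN.hom, comp_zero, zero_comp]
  exact h _

lemma hom_truncLT_obj_shift_one_eq_zero (M : C) (X : DerivedCategory C) (a i : ℤ) [X.IsGE a]
    (h : ∀ (j : ℤ) (k : ℕ), 2 ≤ k → j + k = i + 1 →
      ∀ φ : (singleFunctor C 0).obj M ⟶
        ((singleFunctor C 0).obj ((homologyFunctor C j).obj X))⟦(k : ℤ)⟧, φ = 0)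
    (f : (singleFunctor C i).obj M ⟶ ((t.truncLT i).obj X)⟦(1 : ℤ)⟧) : f = 0 := by
  let P := (ObjectProperty.singleton ((singleFunctor C (i + 1)).obj M)).rightOrthogonal
  have hP : P ((t.truncLT i).obj X) := by
    refine prop_truncLT_obj_of_prop_singleFunctor_obj_homology P X a i fun j hj ↦ ?_
    rintro _ φ ⟨⟩
    exact singleFunctor_hom_eq_zero (k := (i + 1 - j).toNat) (by lia)
      (h j (i + 1 - j).toNat (by lia) (by lia)) φ
  refine hom_shift_eq_zero (fun g ↦ ?_) f
  let e : ((singleFunctor C i).obj M)⟦(-1 : ℤ)⟧ ≅ (singleFunctor C (i + 1)).obj M :=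
    ((singleFunctors C).shiftIso (-1) (i + 1) i (by lia)).app M
  rw [← cancel_epi e.inv, comp_zero]
  exact hP _ ((ObjectProperty.singleton_iff _ _).2 rfl)

lemma exists_singleFunctor_hom_isIso_homology (X : DerivedCategory C) (a i : ℤ) [X.IsGE a]
    (h : ∀ (j : ℤ) (k : ℕ), 2 ≤ k → j + k = i + 1 →
      ∀ φ : (singleFunctor C 0).obj ((homologyFunctor C i).obj X) ⟶
        ((singleFunctor C 0).obj ((homologyFunctor C j).obj X))⟦(k : ℤ)⟧, φ = 0) :
    ∃ g : (singleFunctor C i).obj ((homologyFunctor C i).obj X) ⟶ X,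
      IsIso ((homologyFunctor C i).map g) := by
  obtain ⟨e⟩ := nonempty_truncGELT_obj_iso_singleFunctor_obj_homology X i
  let π := (t.truncGEπ i).app ((t.truncLT (i + 1)).obj X)
  obtain ⟨s, hs⟩ : ∃ s : _ ⟶ (t.truncLT (i + 1)).obj X, e.inv = s ≫ π :=
    Triangle.coyoneda_exact₃ _ (t.triangleLTLTGELT_distinguished i (i + 1) (by lia) X) e.inv
      (hom_truncLT_obj_shift_one_eq_zero _ X a i h _)
  have := isIso_homologyFunctor_map_truncLTι_app X (lt_add_one i)
  have : IsIso ((homologyFunctor C i).map π) := isIso_homologyFunctor_map_truncGEπ_app _ le_rfl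
  have : IsIso ((homologyFunctor C i).map s ≫ (homologyFunctor C i).map π) := by
    rw [← Functor.map_comp, ← hs]
    infer_instance
  have : IsIso ((homologyFunctor C i).map s) :=
    IsIso.of_isIso_comp_right _ ((homologyFunctor C i).map π)
  refine ⟨s ≫ (t.truncLTι (i + 1)).app X, ?_⟩
  rw [Functor.map_comp]
  infer_instance

lemma isZero_homologyFunctor_obj_singleFunctor_obj (M : C) {i n : ℤ} (h : i ≠ n) :
    IsZero ((homologyFunctor C n).obj ((singleFunctor C i).obj M)) := by
  obtain h | h := h.lt_or_gt
  · exact isZero_of_isLE _ i n h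
  · exact isZero_of_isGE _ i n h

lemma isIso_biproduct_desc_of_isIso_homology {X : DerivedCategory C} {s : Finset ℤ}
    (hX : ∀ i ∉ s, IsZero ((homologyFunctor C i).obj X)) {M : s → C}
    (g : ∀ i : s, (singleFunctor C i).obj (M i) ⟶ X)
    (hg : ∀ i : s, IsIso ((homologyFunctor C i).map (g i))) :
    IsIso (biproduct.desc g) := by
  let A (i : s) : DerivedCategory C := (singleFunctor C i).obj (M i)
  have hA {i : s} {n : ℤ} (h : (i : ℤ) ≠ n) : IsZero ((homologyFunctor C n).obj (A i)) :=
    isZero_homologyFunctor_obj_singleFunctor_obj (M i) h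
  refine (DerivedCategory.isIso_iff C _).2 fun n ↦ ?_
  by_cases hn : n ∈ s
  · let ι : A ⟨n, hn⟩ ⟶ ⨁ A := biproduct.ι A ⟨n, hn⟩
    have : IsIso ((homologyFunctor C n).map ι) :=
      isIso_map_biproduct_ι _ A ⟨n, hn⟩ fun i hi ↦ hA fun h ↦ hi (Subtype.ext h)
    have : IsIso ((homologyFunctor C n).map ι ≫
        (homologyFunctor C n).map (biproduct.desc g)) := by
      rw [← Functor.map_comp, biproduct.ι_desc]
      exact hg ⟨n, hn⟩
    exact IsIso.of_isIso_comp_left ((homologyFunctor C n).map ι) _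
  · have hbiproduct : IsZero ((homologyFunctor C n).obj (⨁ A)) :=
      isZero_map_biproduct _ A fun i ↦ hA fun h ↦ hn (h ▸ i.2)
    exact hbiproduct.isIso (hX n hn) _

end

theorem three_cusps_stmt8_general
    {C : Type*} [Category C] [Abelian C] [HasDerivedCategory C]
    (X : DerivedCategory C) (s : Finset ℤ)
    (hs : ∀ i ∉ s, IsZero ((DerivedCategory.homologyFunctor C i).obj X))
    (hext : ∀ (i j : ℤ) (k : ℕ), 2 ≤ k → j + k = i + 1 →
      ∀ φ : (DerivedCategory.singleFunctor C 0).obj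
              ((DerivedCategory.homologyFunctor C i).obj X) ⟶
            ((DerivedCategory.singleFunctor C 0).obj
              ((DerivedCategory.homologyFunctor C j).obj X))⟦(k : ℤ)⟧,
        φ = 0) :
    Nonempty (X ≅ ⨁ (fun i : s =>
      ((DerivedCategory.singleFunctor C 0).obj
        ((DerivedCategory.homologyFunctor C (i : ℤ)).obj X))⟦-(i : ℤ)⟧)) := by
  obtain ⟨a, ha⟩ := s.bddBelow
  have : X.IsGE a := (X.isGE_iff a).2 fun i hi ↦ hs i fun his ↦ hi.not_ge (ha his)
  choose g hg using fun i ↦ exists_singleFunctor_hom_isIso_homology X a i (hext i)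
  have := isIso_biproduct_desc_of_isIso_homology hs (fun i : s ↦ g i) fun i ↦ hg i
  let shiftIso (i : s) := ((DerivedCategory.singleFunctors C).shiftIso (-i) i 0 (by lia)).app
    ((DerivedCategory.homologyFunctor C i).obj X)
  exact ⟨(asIso (biproduct.desc fun i : s ↦ g i)).symm ≪≫
    biproduct.mapIso fun i ↦ (shiftIso i).symm⟩

/-- **Lemma 3.1.** Let `C` be an abelian category and `X` an object of its bounded derived
category (realized as an object of `DerivedCategory C` with bounded cohomology, the bound
being given by `a ≤ b`) such that `Ext^k(H^i(X), H^j(X)) = 0` for all `i, j` and all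
`k ≥ 2`, where `Ext^k(M, N) = Hom_{D(C)}(M, N[k])` for `M`, `N` viewed as complexes
concentrated in degree `0`.  Then `X` splits:
`X ≅ ⊕_{i ∈ ℤ} H^i(X)[-i]`, the (finite) sum being indexed by `a ≤ i ≤ b`. -/
theorem three_cusps_stmt8
    {C : Type*} [Category C] [Abelian C] [HasDerivedCategory C]
    (X : DerivedCategory C) (a b : ℤ)
    (hbound : ∀ i : ℤ, (i < a ∨ b < i) →
      IsZero ((DerivedCategory.homologyFunctor C i).obj X))
    (hext : ∀ (i j : ℤ) (k : ℕ), 2 ≤ k →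
      ∀ φ : (DerivedCategory.singleFunctor C 0).obj
              ((DerivedCategory.homologyFunctor C i).obj X) ⟶
            ((DerivedCategory.singleFunctor C 0).obj
              ((DerivedCategory.homologyFunctor C j).obj X))⟦(k : ℤ)⟧,
        φ = 0) :
    Nonempty (X ≅ ⨁ (fun i : (Finset.Icc a b) =>
      ((DerivedCategory.singleFunctor C 0).obj
        ((DerivedCategory.homologyFunctor C (i : ℤ)).obj X))⟦-(i : ℤ)⟧)) :=
  three_cusps_stmt8_general X (Finset.Icc a b) (fun i hi ↦ hbound i (by grind))
    fun i j k hk _ ↦ hext i j k hk
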